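/- arXiv:1304.0231 — 2 statements merged into one kernel-verified Lean document; each statement's English description precedes it below -/
import Mathlib

section
/- Let K be a field of characteristic ≠ 3 in which 1 is the only cube root of unity. Then O is a maximal partial spread of P₃(K): any two distinct members of O have trivial intersection, and for every 2-dimensional subspace m of K⁴ that does not belong to O there exists ℓ ∈ O with ℓ ∩ m ≠ {0}. -/
/-- The Cayley cubic form `f(x₀,x₁,x₂,x₃) = x₀x₁x₂ − x₁³ − x₀²x₃`. -/
def cayleyF {K : Type*} [Field K] (x : Fin 4 → K) : K :=
  x 0 * x 1 * x 2 - (x 1) ^ 3 - (x 0) ^ 2 * x 3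

/-- The affine point `P(u₁,u₂)` of the Cayley surface. -/
def cayleyP (K : Type*) [Field K] (u₁ u₂ : K) : Fin 4 → K :=
  ![1, u₁, u₂, u₁ * u₂ - u₁ ^ 3]

/-- The direction vector `d(u₁,u₂) = (0,1,3u₁,u₂)`. -/
def cayleyD (K : Type*) [Field K] (u₁ u₂ : K) : Fin 4 → K :=
  ![0, 1, 3 * u₁, u₂]

/-- The osculating tangent `ℓ(u₁,u₂) = span{P(u₁,u₂), d(u₁,u₂)}`. -/
def oscTang (K : Type*) [Field K] (u₁ u₂ : K) : Submodule K (Fin 4 → K) :=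
  Submodule.span K {cayleyP K u₁ u₂, cayleyD K u₁ u₂}

/-- The line `g∞ = span{(0,0,1,0), (0,0,0,1)}`. -/
def gInf (K : Type*) [Field K] : Submodule K (Fin 4 → K) :=
  Submodule.span K {![0, 0, 1, 0], ![0, 0, 0, 1]}

/-- The Betten–Walker line set `O`: all osculating tangents together with `g∞`. -/
def BWset (K : Type*) [Field K] : Set (Submodule K (Fin 4 → K)) :=
  {ℓ | ∃ u₁ u₂ : K, ℓ = oscTang K u₁ u₂} ∪ {gInf K}

/-!
Restricted to an osculating tangent, the Cayley form becomes the negated cube of one coordinate: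
`f(c • P(u) + t • d(u)) = -t³`. When cubing is injective, a nonzero vector `x` on `ℓ(u)` therefore
determines `t` from `f(x)`; it also determines `c = x₀`, and then `u` by linear equations.
So no two osculating tangents meet. A vector of `g∞` has `x₀ = x₁ = 0`, which on `ℓ(u)` forces
`c = t = 0`.

Conversely, the members of `O` cover the plane `x₀ = 0`: a point `(0, t, x₂, x₃)` with `t ≠ 0` is
`t • d(x₂ / 3t, x₃ / t)`. Every line of projective space meets this plane, hence meets a member
of `O`.
-/

theorem pow_injective_of_forall_pow_eq_one {G : Type*} [CommGroupWithZero G] {n : ℕ} (hn : n ≠ 0)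
    (h : ∀ w : G, w ^ n = 1 → w = 1) : Function.Injective fun x : G => x ^ n := by
  intro x y (hxy : x ^ n = y ^ n)
  rcases eq_or_ne y 0 with rfl | hy
  · rwa [zero_pow hn, pow_eq_zero_iff hn] at hxy
  · exact (div_eq_one_iff_eq hy).1 <| h _ <| by rw [div_pow, hxy, div_self (pow_ne_zero n hy)]

theorem exists_mem_ne_zero_map_eq_zero {K V W : Type*} [DivisionRing K] [AddCommGroup V]
    [Module K V] [AddCommGroup W] [Module K W] [FiniteDimensional K W] (f : V →ₗ[K] W)
    {m : Submodule K V} (h : Module.finrank K W < Module.finrank K m) :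
    ∃ x ∈ m, x ≠ 0 ∧ f x = 0 := by
  have : FiniteDimensional K m := FiniteDimensional.of_finrank_pos (Nat.zero_lt_of_lt h)
  obtain ⟨y, hfy, hy⟩ := (Submodule.ne_bot_iff _).1 <|
    LinearMap.ker_ne_bot_of_finrank_lt (f := f.domRestrict m) h
  exact ⟨y, y.2, Subtype.coe_ne_coe.2 hy, hfy⟩

section CayleySurface

variable {K : Type*} [Field K]

theorem mem_oscTang_iff {u₁ u₂ : K} {x : Fin 4 → K} :
    x ∈ oscTang K u₁ u₂ ↔ ∃ c t : K, c • cayleyP K u₁ u₂ + t • cayleyD K u₁ u₂ = x :=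
  Submodule.mem_span_pair

theorem smul_cayleyP_add_smul_cayleyD (u₁ u₂ c t : K) :
    c • cayleyP K u₁ u₂ + t • cayleyD K u₁ u₂ =
      ![c, c * u₁ + t, c * u₂ + t * (3 * u₁), c * (u₁ * u₂ - u₁ ^ 3) + t * u₂] := by
  simp [cayleyP, cayleyD]

theorem mem_gInf_iff {x : Fin 4 → K} : x ∈ gInf K ↔ x 0 = 0 ∧ x 1 = 0 := by
  rw [gInf, Submodule.mem_span_pair]
  constructor
  · rintro ⟨a, b, rfl⟩
    simp
  · rintro ⟨h₀, h₁⟩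
    refine ⟨x 2, x 3, ?_⟩
    ext i
    fin_cases i <;> simp [h₀, h₁]

theorem cayleyF_smul_cayleyP_add_smul_cayleyD (u₁ u₂ c t : K) :
    cayleyF (c • cayleyP K u₁ u₂ + t • cayleyD K u₁ u₂) = -t ^ 3 := by
  simp only [smul_cayleyP_add_smul_cayleyD, cayleyF, Matrix.cons_val]
  ring

theorem disjoint_oscTang_gInf (u₁ u₂ : K) : Disjoint (oscTang K u₁ u₂) (gInf K) := by
  rw [Submodule.disjoint_def]
  intro x hx hx'
  obtain ⟨c, t, rfl⟩ := mem_oscTang_iff.1 hx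
  obtain ⟨hc, ht⟩ := mem_gInf_iff.1 hx'
  rw [smul_cayleyP_add_smul_cayleyD] at hc ht
  obtain rfl : c = 0 := hc
  obtain rfl : t = 0 := by simpa using ht
  simp only [zero_smul, add_zero]

theorem eq_and_eq_of_smul_cayleyP_add_smul_cayleyD_eq (h3 : (3 : K) ≠ 0) {u₁ u₂ v₁ v₂ c t : K}
    (hct : c ≠ 0 ∨ t ≠ 0)
    (h : c • cayleyP K u₁ u₂ + t • cayleyD K u₁ u₂ = c • cayleyP K v₁ v₂ + t • cayleyD K v₁ v₂) :
    u₁ = v₁ ∧ u₂ = v₂ := by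
  simp only [smul_cayleyP_add_smul_cayleyD, Matrix.vecCons_inj] at h
  obtain ⟨-, h₁, h₂, h₃, -⟩ := h
  rcases eq_or_ne c 0 with rfl | hc
  · have ht : t ≠ 0 := hct.resolve_left (not_not.2 rfl)
    simp only [zero_mul, zero_add] at h₂ h₃
    exact ⟨mul_left_cancel₀ h3 (mul_left_cancel₀ ht h₂), mul_left_cancel₀ ht h₃⟩
  · obtain rfl : u₁ = v₁ := mul_left_cancel₀ hc (add_right_cancel h₁)
    exact ⟨rfl, mul_left_cancel₀ hc (add_right_cancel h₂)⟩

theorem eq_and_eq_of_mem_oscTang (h3 : (3 : K) ≠ 0)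
    (hcube : Function.Injective fun x : K => x ^ 3) {u₁ u₂ v₁ v₂ : K} {x : Fin 4 → K}
    (hx : x ≠ 0) (hu : x ∈ oscTang K u₁ u₂) (hv : x ∈ oscTang K v₁ v₂) :
    u₁ = v₁ ∧ u₂ = v₂ := by
  obtain ⟨c, t, rfl⟩ := mem_oscTang_iff.1 hu
  obtain ⟨c', t', h⟩ := mem_oscTang_iff.1 hv
  obtain rfl : c' = c := by
    simpa only [smul_cayleyP_add_smul_cayleyD, Matrix.cons_val] using congrFun h 0
  obtain rfl : t' = t := hcube <| by
    simpa only [cayleyF_smul_cayleyP_add_smul_cayleyD, neg_inj] using congrArg cayleyF h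
  refine eq_and_eq_of_smul_cayleyP_add_smul_cayleyD_eq h3 ?_ h.symm
  contrapose! hx
  simp only [hx, zero_smul, add_zero]

theorem pairwise_disjoint_BWset (h3 : (3 : K) ≠ 0)
    (hcube : Function.Injective fun x : K => x ^ 3) : (BWset K).Pairwise Disjoint := by
  rintro _ (⟨u₁, u₂, rfl⟩ | rfl) _ (⟨v₁, v₂, rfl⟩ | rfl) hne
  · rw [Submodule.disjoint_def]
    intro x hu hv
    by_contra hx
    obtain ⟨rfl, rfl⟩ := eq_and_eq_of_mem_oscTang h3 hcube hx hu hv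
    exact hne rfl
  · exact disjoint_oscTang_gInf u₁ u₂
  · exact (disjoint_oscTang_gInf v₁ v₂).symm
  · exact absurd rfl hne

theorem exists_mem_BWset_of_apply_zero_eq_zero (h3 : (3 : K) ≠ 0) {x : Fin 4 → K}
    (hx : x 0 = 0) : ∃ ℓ ∈ BWset K, x ∈ ℓ := by
  by_cases h1 : x 1 = 0
  · exact ⟨gInf K, Or.inr rfl, mem_gInf_iff.2 ⟨hx, h1⟩⟩
  · refine ⟨oscTang K (x 2 / (3 * x 1)) (x 3 / x 1), Or.inl ⟨_, _, rfl⟩,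
      mem_oscTang_iff.2 ⟨0, x 1, ?_⟩⟩
    ext i
    fin_cases i <;> simp [cayleyD, hx] <;> field_simp

theorem exists_mem_BWset_not_disjoint (h3 : (3 : K) ≠ 0) {m : Submodule K (Fin 4 → K)}
    (hm : 1 < Module.finrank K m) : ∃ ℓ ∈ BWset K, ¬Disjoint ℓ m := by
  obtain ⟨x, hxm, hx, hx0⟩ := exists_mem_ne_zero_map_eq_zero
    (LinearMap.proj 0 : (Fin 4 → K) →ₗ[K] K) (by rwa [Module.finrank_self])
  obtain ⟨ℓ, hℓ, hxℓ⟩ := exists_mem_BWset_of_apply_zero_eq_zero h3 hx0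
  exact ⟨ℓ, hℓ, fun h => hx (Submodule.disjoint_def.1 h x hxℓ hxm)⟩

end CayleySurface

/-- if `char K ≠ 3` and `1` is the only cube root of unity in `K`, then
`O` is a maximal partial spread of `P₃(K)`. -/
theorem bw_maximal_partial_spread (K : Type*) [Field K]
    (hchar : ringChar K ≠ 3) (hroot : ∀ w : K, w ^ 3 = 1 → w = 1) :
    (∀ ℓ ∈ BWset K, ∀ m ∈ BWset K, ℓ ≠ m → ℓ ⊓ m = ⊥) ∧
      (∀ m : Submodule K (Fin 4 → K), Module.finrank K m = 2 → m ∉ BWset K →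
        ∃ ℓ ∈ BWset K, ℓ ⊓ m ≠ ⊥) := by
  have h3 : (3 : K) ≠ 0 := fun h =>
    hchar (CharP.ringChar_of_prime_eq_zero Nat.prime_three (by exact_mod_cast h))
  have hcube : Function.Injective fun x : K => x ^ 3 :=
    pow_injective_of_forall_pow_eq_one three_ne_zero hroot
  simp only [ne_eq, ← disjoint_iff]
  exact ⟨fun _ hℓ _ hm hne => pairwise_disjoint_BWset h3 hcube hℓ hm hne,
    fun m hm _ => exists_mem_BWset_not_disjoint h3 (by rw [hm]; exact one_lt_two)⟩
end

section
/- Let K be a field. For a nonzero vector p = (p₀,p₁,p₂,p₃) ∈ K⁴, all four partial derivatives ∂₀f, ∂₁f, ∂₂f, ∂₃f of the Cayley cubic f vanish at p if and only if either p₀ = p₁ = 0, or p₀ = p₂ = 0 and the characteristic of K is 3. -/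
theorem ringChar_eq_prime_iff {R : Type*} [NonAssocSemiring R] [Nontrivial R] {q : ℕ}
    (hq : q.Prime) : ringChar R = q ↔ (q : R) = 0 :=
  ⟨fun h ↦ h ▸ ringChar.Nat.cast_ringChar, CharP.ringChar_of_prime_eq_zero hq⟩

theorem mul_eq_zero_and_mul_pow_eq_zero_iff {M : Type*} [MonoidWithZero M] [NoZeroDivisors M]
    {a b c : M} {n : ℕ} (hn : n ≠ 0) :
    a * b = 0 ∧ c * a ^ n = 0 ↔ a = 0 ∨ (b = 0 ∧ c = 0) := by
  rw [mul_eq_zero, mul_eq_zero, pow_eq_zero_iff hn, or_comm (a := c = 0), or_and_left]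

theorem cayley_partials_eq_zero_iff {R : Type*} [Ring R] [IsReduced R] (p : Fin 4 → R) :
    (p 1 * p 2 - 2 * p 0 * p 3 = 0 ∧ p 0 * p 2 - 3 * (p 1) ^ 2 = 0 ∧
        p 0 * p 1 = 0 ∧ -((p 0) ^ 2) = 0) ↔
      p 0 = 0 ∧ p 1 * p 2 = 0 ∧ 3 * (p 1) ^ 2 = 0 := by
  constructor
  · rintro ⟨h₀, h₁, -, h₃⟩
    have hp₀ : p 0 = 0 := eq_zero_of_pow_eq_zero (neg_eq_zero.mp h₃)
    exact ⟨hp₀, by simpa [hp₀] using h₀, by simpa [hp₀] using h₁⟩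
  · rintro ⟨hp₀, h₁₂, h₁⟩
    simp [hp₀, h₁₂, h₁]

theorem cayley_singular_points_general {R : Type*} [Ring R] [IsDomain R] (p : Fin 4 → R) :
    (p 1 * p 2 - 2 * p 0 * p 3 = 0 ∧ p 0 * p 2 - 3 * (p 1) ^ 2 = 0 ∧
        p 0 * p 1 = 0 ∧ -((p 0) ^ 2) = 0) ↔
      ((p 0 = 0 ∧ p 1 = 0) ∨ (p 0 = 0 ∧ p 2 = 0 ∧ ringChar R = 3)) := by
  rw [cayley_partials_eq_zero_iff, mul_eq_zero_and_mul_pow_eq_zero_iff two_ne_zero, and_or_left,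
    ringChar_eq_prime_iff Nat.prime_three, Nat.cast_ofNat]

/-- for a nonzero `p ∈ K⁴`, all four partial derivatives of the Cayley
cubic `f` vanish at `p` iff either `p₀ = p₁ = 0`, or `p₀ = p₂ = 0` and `char K = 3`. -/
theorem cayley_singular_points (K : Type*) [Field K] (p : Fin 4 → K) (hp : p ≠ 0) :
    (p 1 * p 2 - 2 * p 0 * p 3 = 0 ∧ p 0 * p 2 - 3 * (p 1) ^ 2 = 0 ∧
        p 0 * p 1 = 0 ∧ -((p 0) ^ 2) = 0) ↔
      ((p 0 = 0 ∧ p 1 = 0) ∨ (p 0 = 0 ∧ p 2 = 0 ∧ ringChar K = 3)) :=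
  cayley_singular_points_general p
end
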